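/- Let n ≥ 1, m = 2n, and let C ∈ ℂ^{2n×4n} be a normalized system of boundary conditions of rank 2n that is dissipative, with orders k_1 ≥ k_2 ≥ … ≥ k_{2n} and leading pairs (α_j, β_j). Let ω_1, …, ω_{2n} be the 2n complex solutions of ω^{2n} = −1, enumerated so that Re(ω_1·e^{iπ/(4n)}) < Re(ω_2·e^{iπ/(4n)}) < … < Re(ω_{2n}·e^{iπ/(4n)}) (these real parts are pairwise distinct, so the enumeration is well defined). For s ∈ ℂ, s ≠ 0, let D(s) be the 2n×2n matrix whose (j,i) entry equals α_j·ω_i^{k_j} for 1 ≤ i ≤ n−1, (α_j + s·β_j)·ω_n^{k_j} for i = n, (α_j + s^{−1}·β_j)·ω_{n+1}^{k_j} for i = n+1, and β_j·ω_i^{k_j} for n+2 ≤ i ≤ 2n. Then the function s ↦ s·det(D(s)) is a polynomial in s of degree at most 2, say s·det(D(s)) = θ_{−1} + θ_0·s + θ_1·s², and at least one of θ_{−1}, θ_1 is nonzero; i.e., the boundary conditions are Birkhoff regular. -/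

import Mathlib

open ComplexOrder

/-- A system of boundary conditions of order `2n` is a matrix `C ∈ ℂ^{2n×4n}`; we index
the `4n` columns by `Fin (2n) ⊕ Fin (2n)`: `Sum.inl k` is the coefficient of `y^{(k)}(0)`
and `Sum.inr k` that of `y^{(k)}(1)`.  The order of row `j` is the largest `k` with
`(C_{j,k}, C_{j,2n+k}) ≠ (0,0)`. -/
noncomputable def rowOrder {m : ℕ} (C : Matrix (Fin m) (Fin m ⊕ Fin m) ℂ) (j : Fin m) : ℕ :=
  sSup {k : ℕ | ∃ h : k < m, C j (Sum.inl ⟨k, h⟩) ≠ 0 ∨ C j (Sum.inr ⟨k, h⟩) ≠ 0}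

/-- The leading pair `(α_j, β_j) = (C_{j,k_j}, C_{j,m+k_j})` of row `j`. -/
noncomputable def leadingPair {m : ℕ} (C : Matrix (Fin m) (Fin m ⊕ Fin m) ℂ) (j : Fin m) :
    ℂ × ℂ :=
  if h : rowOrder C j < m then
    (C j (Sum.inl ⟨rowOrder C j, h⟩), C j (Sum.inr ⟨rowOrder C j, h⟩))
  else 0

/-- The system `C` is normalized if, for every value `k`, the leading pairs of the rows
of order `k` are linearly independent in `ℂ²`. -/
def IsNormalized {m : ℕ} (C : Matrix (Fin m) (Fin m ⊕ Fin m) ℂ) : Prop :=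
  ∀ k : ℕ, LinearIndependent ℂ (fun j : {j : Fin m // rowOrder C j = k} => leadingPair C j.1)

/-- The quadratic form `q_J(u) = i·(−1)^{n+1} · Σ_{p=0}^{2n−1} (−1)^{p+1} u_p·conj(u_{2n−1−p})`. -/
noncomputable def qJ (n : ℕ) (u : Fin (2 * n) → ℂ) : ℂ :=
  Complex.I * (-1 : ℂ) ^ (n + 1) *
    ∑ p : Fin (2 * n), (-1 : ℂ) ^ ((p : ℕ) + 1) * u p * (starRingEnd ℂ) (u p.rev)

/-- The system `C` is dissipative if `q_J(v) − q_J(u) ≥ 0` for every `(u,v)` satisfying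
`Σ_k C_{j,k}u_k + C_{j,2n+k}v_k = 0` for all rows `j` (dissipativity of the operator
generated by `l₀(y) = (−i)^{2n}y^{(2n)}` and these boundary conditions). -/
def IsDissipativeBC (n : ℕ) (C : Matrix (Fin (2 * n)) (Fin (2 * n) ⊕ Fin (2 * n)) ℂ) : Prop :=
  ∀ u v : Fin (2 * n) → ℂ,
    (∀ j, ∑ k, (C j (Sum.inl k) * u k + C j (Sum.inr k) * v k) = 0) →
    0 ≤ qJ n v - qJ n u

/-!
Scaling the `k`-th derivatives at both endpoints by `r ^ k` multiplies the forms `q_J` at `0` and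
at `1` by the same positive factor, so the scaled conditions stay dissipative. As `r → ∞` they
converge, after normalizing the rows, to the system that keeps only the leading pairs. By
normalization this limit still has full rank, so its solutions are limits of solutions of the scaled
systems and it is dissipative as well.

If `θ_{-1}` or `θ_1` vanishes, the leading system is solved by a nonzero combination of exponentials
decaying away from `0` and of exponentials decaying away from `1`. Up to a constant of known sign,
`q_J` of a combination `∑ c_i exp (ζ_i t)` with equal `ζ_i ^ (2n)` is the quadratic form of the
Cauchy matrix `1 / (conj ζ_i + ζ_l)`, which is positive definite when the `ζ_i` are distinct and lie
in the right half-plane. Hence both boundary terms have the sign that contradicts dissipativity.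

The sign constant depends on the parity of `n`. With `φ = π / (4n)`, the modes `ω_i e^{iφ}` have the
required sign for even `n` and yield `θ_{-1} ≠ 0`. For odd `n` one has to use `ω_i e^{-iφ}`; this
opposite rotation exchanges the half-planes of the two middle roots `±i` and of no others, so it
yields `θ_1 ≠ 0`.
-/

section

open Complex Matrix
open scoped ComplexConjugate

/-! ### Positivity of the Cauchy matrix -/

theorem eq_zero_of_forall_sum_mul_pow_eq_zero {R ι : Type*} [CommRing R] [IsDomain R] [Fintype ι]
    {f v : ι → R} (hf : Function.Injective f) (h : ∀ k : ℕ, ∑ i, v i * f i ^ k = 0) : v = 0 := by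
  let e := Fintype.equivFin ι
  have hv : v ∘ e.symm = 0 :=
    eq_zero_of_forall_pow_sum_mul_pow_eq_zero (hf.comp e.symm.injective) fun k ↦
      (e.symm.sum_comp fun i ↦ v i * f i ^ (k : ℕ)).trans (h k)
  simpa [Function.comp_assoc] using congrArg (· ∘ e) hv

theorem add_one_ne_zero_of_re_pos {z : ℂ} (hz : 0 < z.re) : z + 1 ≠ 0 :=
  ne_zero_of_re_pos (by simpa using add_pos hz one_pos)

/-- The Cayley transform `z ↦ (z - 1) / (z + 1)`, which maps the right half plane into the unit
disc and so turns the Cauchy kernel into a geometric series. -/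
noncomputable def cayley (z : ℂ) : ℂ := (z - 1) / (z + 1)

theorem norm_cayley_lt_one {z : ℂ} (hz : 0 < z.re) : ‖cayley z‖ < 1 := by
  rw [cayley, norm_div, div_lt_one (norm_pos_iff.mpr (add_one_ne_zero_of_re_pos hz)),
    ← sq_lt_sq₀ (norm_nonneg _) (norm_nonneg _), Complex.sq_norm, Complex.sq_norm,
    normSq_apply, normSq_apply]
  simp only [sub_re, sub_im, add_re, add_im, one_re, one_im]
  linarith

theorem conj_cayley (z : ℂ) : conj (cayley z) = cayley (conj z) := by
  simp only [cayley, map_div₀, map_sub, map_add, map_one]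

theorem injOn_cayley : Set.InjOn cayley {z | 0 < z.re} := by
  intro z hz w hw h
  rw [cayley, cayley, div_eq_div_iff (add_one_ne_zero_of_re_pos hz)
    (add_one_ne_zero_of_re_pos hw)] at h
  linear_combination h / 2

theorem hasSum_cayley_mul_cayley_pow {z w : ℂ} (hz : 0 < z.re) (hw : 0 < w.re) :
    HasSum (fun k : ℕ ↦ 2 / (z + 1) / (w + 1) * (cayley z * cayley w) ^ k) (z + w)⁻¹ := by
  have hz1 := add_one_ne_zero_of_re_pos hz
  have hw1 := add_one_ne_zero_of_re_pos hw
  have hzw : z + w ≠ 0 := ne_zero_of_re_pos (by simpa using add_pos hz hw)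
  have hnorm : ‖cayley z * cayley w‖ < 1 := by
    rw [norm_mul]
    exact mul_lt_one_of_nonneg_of_lt_one_left (norm_nonneg _) (norm_cayley_lt_one hz)
      (norm_cayley_lt_one hw).le
  have hone_sub : 1 - cayley z * cayley w = 2 * (z + w) / ((z + 1) * (w + 1)) := by
    rw [cayley, cayley]
    field_simp
    ring
  have hvalue : (z + w)⁻¹ = 2 / (z + 1) / (w + 1) * (1 - cayley z * cayley w)⁻¹ := by
    rw [hone_sub]
    field_simp
  exact hvalue ▸ (hasSum_geometric_of_norm_lt_one hnorm).mul_left _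

/-- The Hermitian Cauchy matrix with entries `1 / (conj ζ_i + ζ_l)`, the Gram matrix of the
functions `t ↦ exp (-ζ_l t)` in `L²(0, ∞)` when all `ζ_l` lie in the right half plane. -/
noncomputable def cauchyGram {ι : Type*} (ζ : ι → ℂ) : Matrix ι ι ℂ :=
  Matrix.of fun i l ↦ (conj (ζ i) + ζ l)⁻¹

section Cauchy

variable {ι : Type*} [Fintype ι] {ζ : ι → ℂ}

theorem star_dotProduct_cauchyGram_mulVec (c : ι → ℂ) :
    star c ⬝ᵥ (cauchyGram ζ *ᵥ c) = ∑ i, ∑ l, conj (c i) * c l * (conj (ζ i) + ζ l)⁻¹ := by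
  simp only [dotProduct, mulVec, cauchyGram, of_apply, Pi.star_apply, RCLike.star_def,
    Finset.mul_sum]
  exact Finset.sum_congr rfl fun i _ ↦ Finset.sum_congr rfl fun l _ ↦ by ring

theorem hasSum_star_dotProduct_cauchyGram_mulVec (hζ : ∀ i, 0 < (ζ i).re) (c : ι → ℂ) :
    HasSum (fun k : ℕ ↦ ((2 * ‖∑ i, c i / (ζ i + 1) * cayley (ζ i) ^ k‖ ^ 2 : ℝ) : ℂ))
      (star c ⬝ᵥ (cauchyGram ζ *ᵥ c)) := by
  rw [star_dotProduct_cauchyGram_mulVec]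
  refine (hasSum_sum fun i _ ↦ hasSum_sum fun l _ ↦ (hasSum_cayley_mul_cayley_pow
    (z := conj (ζ i)) (by simpa using hζ i) (hζ l)).mul_left (conj (c i) * c l)).congr_fun
      fun k ↦ ?_
  push_cast
  rw [← conj_mul', map_sum, Finset.sum_mul_sum, Finset.mul_sum]
  refine Finset.sum_congr rfl fun i _ ↦ ?_
  rw [Finset.mul_sum]
  refine Finset.sum_congr rfl fun l _ ↦ ?_
  simp only [map_mul, map_div₀, map_pow, map_add, map_one, conj_cayley]
  ring

end Cauchy

theorem posDef_cauchyGram {ι : Type*} [Finite ι] {ζ : ι → ℂ} (hinj : Function.Injective ζ)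
    (hζ : ∀ i, 0 < (ζ i).re) : (cauchyGram ζ).PosDef := by
  have := Fintype.ofFinite ι
  refine .of_dotProduct_mulVec_pos (by ext; simp [cauchyGram, add_comm]) fun c hc ↦ ?_
  obtain ⟨k, hk⟩ : ∃ k : ℕ, ∑ i, c i / (ζ i + 1) * cayley (ζ i) ^ k ≠ 0 := by
    by_contra! h
    have hdiv := eq_zero_of_forall_sum_mul_pow_eq_zero
      (fun i l hil ↦ hinj (injOn_cayley (hζ i) (hζ l) hil)) h
    exact hc (funext fun i ↦
      (div_eq_zero_iff.mp (congrFun hdiv i)).resolve_right (add_one_ne_zero_of_re_pos (hζ i)))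
  refine hasSum_lt (fun k ↦ ?_) (i := k) ?_ hasSum_zero
    (hasSum_star_dotProduct_cauchyGram_mulVec hζ c)
  · exact zero_le_real.mpr (by positivity)
  · exact zero_lt_real.mpr (by positivity)

/-! ### The form `qJ` on exponential solutions -/

theorem sum_neg_one_pow_mul_pow_mul_pow_rev {R : Type*} [CommRing R] {N : ℕ} (hN : Even N)
    (z w : R) :
    (∑ p : Fin N, (-1) ^ ((p : ℕ) + 1) * z ^ (p : ℕ) * w ^ (p.rev : ℕ)) * (z + w) =
      z ^ N - w ^ N := by
  have h := (Commute.all (-z) w).geom_sum₂_mul N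
  rw [hN.neg_pow, ← Fin.sum_univ_eq_sum_range (fun p ↦ (-z) ^ p * w ^ (N - 1 - p))] at h
  rw [← h, Finset.sum_mul, Finset.sum_mul]
  refine Finset.sum_congr rfl fun p _ ↦ ?_
  rw [Fin.val_rev, Nat.sub_add_eq, Nat.sub_right_comm, neg_pow z]
  ring

/-- The Cauchy data `(y^{(k)}(0))_{k < m}` of the function `y(t) = ∑ c_i exp(ζ_i t)`. -/
def cauchyData {ι : Type*} [Fintype ι] {m : ℕ} (c ζ : ι → ℂ) (k : Fin m) : ℂ :=
  ∑ i, c i * ζ i ^ (k : ℕ)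

theorem qJ_pow_mul (n : ℕ) (t : ℝ) (u : Fin (2 * n) → ℂ) :
    qJ n (fun k ↦ (t : ℂ) ^ (k : ℕ) * u k) = (t : ℂ) ^ (2 * n - 1) * qJ n u := by
  unfold qJ
  rw [mul_left_comm, Finset.mul_sum _ _ ((t : ℂ) ^ (2 * n - 1))]
  refine congrArg _ (Finset.sum_congr rfl fun p _ ↦ ?_)
  have hp : 2 * n - 1 = (p : ℕ) + (p.rev : ℕ) := by
    rw [Fin.val_rev]
    omega
  rw [hp, pow_add, map_mul, map_pow, conj_ofReal]
  ring

section CauchyData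

variable {ι : Type*} [Fintype ι] {n : ℕ} {c ζ : ι → ℂ} {μ : ℂ}

theorem qJ_cauchyData_neg (hn : n ≠ 0) :
    qJ n (cauchyData c (-ζ)) = -qJ n (cauchyData c ζ) := by
  have hdata : cauchyData c (-ζ) =
      fun k : Fin (2 * n) ↦ ((-1 : ℝ) : ℂ) ^ (k : ℕ) * cauchyData c ζ k := by
    funext k
    simp only [cauchyData, Finset.mul_sum, Pi.neg_apply, neg_pow (ζ _), ofReal_neg, ofReal_one,
      mul_left_comm]
  rw [hdata, qJ_pow_mul, ofReal_neg, ofReal_one,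
    Odd.neg_one_pow (Nat.Even.sub_odd (by omega) (even_two_mul n) odd_one), neg_one_mul]

theorem qJ_cauchyData (hζ : ∀ i, 0 < (ζ i).re) (hμ : ∀ i, ζ i ^ (2 * n) = μ) :
    qJ n (cauchyData c ζ) =
      (((-1) ^ n * (2 * μ.im) : ℝ) : ℂ) * (star c ⬝ᵥ (cauchyGram ζ *ᵥ c)) := by
  have hgeom (i l : ι) : ∑ p : Fin (2 * n),
      (-1) ^ ((p : ℕ) + 1) * ζ l ^ (p : ℕ) * conj (ζ i) ^ (p.rev : ℕ) =
        (2 * μ.im : ℝ) * I * (conj (ζ i) + ζ l)⁻¹ := by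
    have hne : conj (ζ i) + ζ l ≠ 0 :=
      ne_zero_of_re_pos (by simpa using add_pos (hζ i) (hζ l))
    rw [eq_mul_inv_iff_mul_eq₀ hne, add_comm (conj (ζ i)),
      sum_neg_one_pow_mul_pow_mul_pow_rev (even_two_mul n), hμ, ← map_pow, hμ, sub_conj]
  have hexpand : ∑ p : Fin (2 * n), (-1 : ℂ) ^ ((p : ℕ) + 1) * cauchyData c ζ p *
      conj (cauchyData c ζ p.rev) =
        ∑ i, ∑ l, conj (c i) * c l * ∑ p : Fin (2 * n),
          (-1) ^ ((p : ℕ) + 1) * ζ l ^ (p : ℕ) * conj (ζ i) ^ (p.rev : ℕ) := by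
    simp_rw [cauchyData, map_sum, map_mul, map_pow, mul_assoc, Finset.sum_mul_sum, Finset.mul_sum]
    rw [Finset.sum_comm_cycle]
    refine Finset.sum_congr rfl fun i _ ↦ Finset.sum_comm.trans ?_
    exact Finset.sum_congr rfl fun l _ ↦ Finset.sum_congr rfl fun p _ ↦ by ring
  rw [qJ, hexpand, star_dotProduct_cauchyGram_mulVec, Finset.mul_sum, Finset.mul_sum]
  refine Finset.sum_congr rfl fun i _ ↦ ?_
  rw [Finset.mul_sum, Finset.mul_sum]
  refine Finset.sum_congr rfl fun l _ ↦ ?_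
  rw [hgeom]
  push_cast
  linear_combination (-1) ^ (n + 1) * (conj (c i) * c l * (2 * μ.im) * (conj (ζ i) + ζ l)⁻¹) * I_sq

theorem qJ_cauchyData_lt_zero (hinj : Function.Injective ζ) (hζ : ∀ i, 0 < (ζ i).re)
    (hμ : ∀ i, ζ i ^ (2 * n) = μ) (hsign : (-1) ^ n * μ.im < 0) (hc : c ≠ 0) :
    qJ n (cauchyData c ζ) < 0 := by
  rw [qJ_cauchyData hζ hμ]
  exact mul_neg_of_neg_of_pos (by rw [← ofReal_zero, real_lt_real]; linarith)
    ((posDef_cauchyGram hinj hζ).dotProduct_mulVec_pos hc)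

theorem qJ_cauchyData_le_zero (hinj : Function.Injective ζ) (hζ : ∀ i, 0 < (ζ i).re)
    (hμ : ∀ i, ζ i ^ (2 * n) = μ) (hsign : (-1) ^ n * μ.im < 0) : qJ n (cauchyData c ζ) ≤ 0 := by
  rw [qJ_cauchyData hζ hμ]
  exact mul_nonpos_of_nonpos_of_nonneg (by rw [← ofReal_zero, real_le_real]; linarith)
    ((posDef_cauchyGram hinj hζ).posSemidef.dotProduct_mulVec_nonneg c)

end CauchyData

/-! ### The leading boundary system -/

theorem mulVec_surjective_of_linearIndependent_row {K m n : Type*} [Field K] [Finite m]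
    [Fintype n] {M : Matrix m n K} (h : LinearIndependent K M.row) :
    Function.Surjective M.mulVec := by
  have := Fintype.ofFinite m
  exact (LinearMap.range_eq_top (f := M.mulVecLin)).mp (Submodule.eq_top_of_finrank_eq
    (h.rank_matrix.trans (Module.finrank_fintype_fun_eq_card K).symm))

theorem exists_continuous_mulVec_eq_zero {X R m n : Type*} [TopologicalSpace X] [CommRing R]
    [TopologicalSpace R] [IsTopologicalRing R] [Finite m] [DecidableEq m] [Fintype n]
    {M : X → Matrix m n R} (hM : Continuous M) {x₀ : X} {B : Matrix n m R} (hB : M x₀ * B = 1)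
    {v : n → R} (hv : M x₀ *ᵥ v = 0) :
    ∃ w : X → n → R, Continuous w ∧ w x₀ = v ∧ ∀ x, M x *ᵥ w x = 0 := by
  have := Fintype.ofFinite m
  have hMB : Continuous fun x ↦ M x * B := hM.matrix_mul continuous_const
  refine ⟨fun x ↦ (M x * B).det • v - B *ᵥ ((M x * B).adjugate *ᵥ (M x *ᵥ v)), ?_, ?_,
    fun x ↦ ?_⟩
  · exact (hMB.matrix_det.smul continuous_const).sub (continuous_const.matrix_mulVec
      (hMB.matrix_adjugate.matrix_mulVec (hM.matrix_mulVec continuous_const)))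
  · simp only [hB, hv, det_one, one_smul, mulVec_zero, sub_zero]
  · rw [mulVec_sub, mulVec_smul, mulVec_mulVec, mulVec_mulVec, mul_adjugate, smul_mulVec,
      one_mulVec, sub_self]

/-- The order of the derivative which a column of a boundary matrix multiplies. -/
def colOrder {m : ℕ} : Fin m ⊕ Fin m → ℕ := Sum.elim (↑) (↑)

/-- The boundary conditions `C` after the dilation `t ↦ ε t` of the variable, each row divided by
its power of `ε`. At `ε = 0` this is the leading boundary system, in which only the terms of
highest order of each row survive. The truncated subtraction is harmless because `C j x = 0`
whenever `rowOrder C j < colOrder x`. -/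
noncomputable def rescaledBC {m : ℕ} (C : Matrix (Fin m) (Fin m ⊕ Fin m) ℂ) (ε : ℝ) :
    Matrix (Fin m) (Fin m ⊕ Fin m) ℂ :=
  Matrix.of fun j x ↦ C j x * (ε : ℂ) ^ (rowOrder C j - colOrder x)

/-- The quadratic form `q_J(v) - q_J(u)` whose sign on the kernel of a boundary system expresses
dissipativity. -/
noncomputable def boundaryForm (n : ℕ) (x : Fin (2 * n) ⊕ Fin (2 * n) → ℂ) : ℂ :=
  qJ n (x ∘ Sum.inr) - qJ n (x ∘ Sum.inl)

section RowOrder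

variable {m : ℕ} {C : Matrix (Fin m) (Fin m ⊕ Fin m) ℂ}

theorem le_rowOrder {j k : Fin m} (h : C j (.inl k) ≠ 0 ∨ C j (.inr k) ≠ 0) :
    (k : ℕ) ≤ rowOrder C j :=
  le_csSup ⟨m, fun _ hk ↦ hk.1.le⟩ ⟨k.2, h⟩

theorem apply_eq_zero_of_rowOrder_lt {j : Fin m} {x : Fin m ⊕ Fin m}
    (h : rowOrder C j < colOrder x) : C j x = 0 := by
  contrapose! h
  cases x with
  | inl k => exact le_rowOrder (.inl h)
  | inr k => exact le_rowOrder (.inr h)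

theorem IsNormalized.rowOrder_lt (hC : IsNormalized C) (j : Fin m) : rowOrder C j < m := by
  by_contra h
  exact (hC (rowOrder C j)).ne_zero ⟨j, rfl⟩ (by simp [leadingPair, h])

theorem continuous_rescaledBC : Continuous (rescaledBC C) :=
  continuous_matrix fun j x ↦ by
    simp only [rescaledBC, of_apply]
    fun_prop

theorem rescaledBC_mulVec (C : Matrix (Fin m) (Fin m ⊕ Fin m) ℂ) (ε : ℝ)
    (x : Fin m ⊕ Fin m → ℂ) :
    (rescaledBC C ε *ᵥ fun k ↦ (ε : ℂ) ^ colOrder k * x k) =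
      fun j ↦ (ε : ℂ) ^ rowOrder C j * (C *ᵥ x) j := by
  funext j
  simp only [mulVec, dotProduct, Finset.mul_sum, rescaledBC, of_apply]
  refine Finset.sum_congr rfl fun k _ ↦ ?_
  rcases le_or_gt (colOrder k) (rowOrder C j) with h | h
  · rw [← Nat.sub_add_cancel h, Nat.add_sub_cancel, pow_add]
    ring
  · simp only [apply_eq_zero_of_rowOrder_lt h, zero_mul, mul_zero]

theorem rescaledBC_zero_pair (j k : Fin m) :
    (rescaledBC C 0 j (.inl k), rescaledBC C 0 j (.inr k)) =
      if rowOrder C j = k then leadingPair C j else 0 := by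
  rcases lt_trichotomy (rowOrder C j) k with h | h | h
  · have hzero (x : Fin m ⊕ Fin m) (hx : colOrder x = k) : C j x = 0 :=
      apply_eq_zero_of_rowOrder_lt (h.trans_eq hx.symm)
    simp [rescaledBC, hzero (.inl k) rfl, hzero (.inr k) rfl, h.ne]
  · simp [rescaledBC, leadingPair, colOrder, h]
  · simp [rescaledBC, colOrder, h.ne', Nat.sub_ne_zero_of_lt h]

theorem IsNormalized.linearIndependent_rescaledBC_zero (hC : IsNormalized C) :
    LinearIndependent ℂ (rescaledBC C 0).row := by
  rw [Fintype.linearIndependent_iff]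
  intro a ha j
  let k : Fin m := ⟨rowOrder C j, hC.rowOrder_lt j⟩
  have hpairs : ∑ i, a i • (rescaledBC C 0 i (.inl k), rescaledBC C 0 i (.inr k)) = 0 := by
    have hcol (x : Fin m ⊕ Fin m) : ∑ i, a i • rescaledBC C 0 i x = 0 := by
      simpa using congrFun ha x
    ext
    · simpa [Prod.fst_sum] using hcol (.inl k)
    · simpa [Prod.snd_sum] using hcol (.inr k)
  simp only [rescaledBC_zero_pair, smul_ite, smul_zero, ← Finset.sum_filter] at hpairs
  rw [Finset.sum_subtype (p := fun i ↦ rowOrder C i = rowOrder C j) _ (by simp [k])] at hpairs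
  exact Fintype.linearIndependent_iff.mp (hC (rowOrder C j)) (fun i ↦ a i) hpairs ⟨j, rfl⟩

theorem IsNormalized.rescaledBC_zero_mulVec (hC : IsNormalized C) (x : Fin m ⊕ Fin m → ℂ)
    (j : Fin m) :
    (rescaledBC C 0 *ᵥ x) j =
      (leadingPair C j).1 * x (.inl ⟨rowOrder C j, hC.rowOrder_lt j⟩) +
        (leadingPair C j).2 * x (.inr ⟨rowOrder C j, hC.rowOrder_lt j⟩) := by
  have hleft (k : Fin m) : rescaledBC C 0 j (.inl k) = _ :=
    congrArg Prod.fst (rescaledBC_zero_pair j k)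
  have hright (k : Fin m) : rescaledBC C 0 j (.inr k) = _ :=
    congrArg Prod.snd (rescaledBC_zero_pair j k)
  simp only [mulVec, dotProduct, Fintype.sum_sum_type, ← Finset.sum_add_distrib]
  rw [Finset.sum_eq_single ⟨rowOrder C j, hC.rowOrder_lt j⟩]
  · rw [hleft, hright, if_pos rfl]
  · intro k _ hk
    rw [hleft, hright, if_neg fun h ↦ hk (Fin.ext h.symm)]
    simp
  · simp

end RowOrder

section Dissipative

variable {n : ℕ} {C : Matrix (Fin (2 * n)) (Fin (2 * n) ⊕ Fin (2 * n)) ℂ}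
  {x : Fin (2 * n) ⊕ Fin (2 * n) → ℂ}

theorem continuous_boundaryForm : Continuous (boundaryForm n) := by
  have := continuous_conj
  unfold boundaryForm qJ
  fun_prop

theorem boundaryForm_pow_mul (t : ℝ) (x : Fin (2 * n) ⊕ Fin (2 * n) → ℂ) :
    boundaryForm n (fun k ↦ (t : ℂ) ^ colOrder k * x k) =
      (t : ℂ) ^ (2 * n - 1) * boundaryForm n x := by
  rw [boundaryForm, boundaryForm, mul_sub, ← qJ_pow_mul, ← qJ_pow_mul]
  rfl

theorem IsDissipativeBC.boundaryForm_nonneg (hC : IsDissipativeBC n C) (hx : C *ᵥ x = 0) :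
    0 ≤ boundaryForm n x :=
  hC _ _ fun j ↦ by
    simpa [mulVec, dotProduct, Fintype.sum_sum_type, Finset.sum_add_distrib] using congrFun hx j

theorem IsDissipativeBC.boundaryForm_nonneg_of_rescaledBC (hC : IsDissipativeBC n C) {ε : ℝ}
    (hε : 0 < ε) (hx : rescaledBC C ε *ᵥ x = 0) : 0 ≤ boundaryForm n x := by
  have hε0 (k : ℕ) : (ε : ℂ) ^ k ≠ 0 := pow_ne_zero k (ofReal_ne_zero.mpr hε.ne')
  obtain ⟨y, rfl⟩ : ∃ y, (fun k ↦ (ε : ℂ) ^ colOrder k * y k) = x :=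
    ⟨fun k ↦ x k / (ε : ℂ) ^ colOrder k, funext fun k ↦ mul_div_cancel₀ _ (hε0 _)⟩
  rw [rescaledBC_mulVec] at hx
  have hy : C *ᵥ y = 0 := funext fun j ↦ (mul_eq_zero.mp (congrFun hx j)).resolve_left (hε0 _)
  rw [boundaryForm_pow_mul]
  exact mul_nonneg (pow_nonneg (zero_le_real.mpr hε.le) _) (hC.boundaryForm_nonneg hy)

theorem IsDissipativeBC.boundaryForm_nonneg_of_rescaledBC_zero (hC : IsDissipativeBC n C)
    (hnorm : IsNormalized C) (hx : rescaledBC C 0 *ᵥ x = 0) : 0 ≤ boundaryForm n x := by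
  obtain ⟨B, hB⟩ := mulVec_surjective_iff_exists_right_inverse.mp
    (mulVec_surjective_of_linearIndependent_row hnorm.linearIndependent_rescaledBC_zero)
  obtain ⟨w, hw, rfl, hker⟩ := exists_continuous_mulVec_eq_zero continuous_rescaledBC hB hx
  have hlim := ((continuous_boundaryForm.comp hw).tendsto 0).mono_left
    (nhdsWithin_le_nhds (s := Set.Ioi 0))
  refine ge_of_tendsto hlim ?_
  filter_upwards [self_mem_nhdsWithin] with ε hε
  exact hC.boundaryForm_nonneg_of_rescaledBC hε (hker ε)

end Dissipative

/-! ### Characteristic determinants -/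

section Splice

variable {k R : Type*} [DecidableEq k]

/-- The matrix whose columns with index in `S` are those of `A` and whose other columns are those
of `B`. -/
def spliceCols {m : Type*} (A B : Matrix m k R) (S : Finset k) : Matrix m k R :=
  Matrix.of fun j ↦ S.piecewise (A j) (B j)

theorem spliceCols_insert {m : Type*} (A B : Matrix m k R) (S : Finset k) (i : k) :
    spliceCols A B (insert i S) = (spliceCols A B S).updateCol i (A.col i) := by
  ext j l
  by_cases hl : l = i <;> simp [spliceCols, Finset.piecewise, hl]

theorem updateCol_spliceCols_of_notMem {m : Type*} (A B : Matrix m k R) {S : Finset k} {i : k}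
    (hi : i ∉ S) : (spliceCols A B S).updateCol i (B.col i) = spliceCols A B S := by
  ext j l
  by_cases hl : l = i <;> simp [spliceCols, Finset.piecewise, hl, hi]

theorem mul_det_updateCol_updateCol_spliceCols {K : Type*} [Field K] [Fintype k]
    (A B : Matrix k k K) {S : Finset k} {p q : k} (hp : p ∉ S) (hq : q ∉ S) (hpq : p ≠ q) {s : K}
    (hs : s ≠ 0) :
    s * (((spliceCols A B S).updateCol p (A.col p + s • B.col p)).updateCol q
        (A.col q + s⁻¹ • B.col q)).det =
      (spliceCols A B (insert p S)).det +
        ((spliceCols A B (insert q (insert p S))).det + (spliceCols A B S).det) * s +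
        (spliceCols A B (insert q S)).det * s ^ 2 := by
  have hexpand (y : k → K) :
      (((spliceCols A B S).updateCol p (A.col p + s • B.col p)).updateCol q y).det =
        ((spliceCols A B (insert p S)).updateCol q y).det +
          s * ((spliceCols A B S).updateCol q y).det := by
    rw [updateCol_comm _ hpq, det_updateCol_add, det_updateCol_smul, updateCol_comm _ hpq.symm,
      updateCol_comm _ hpq.symm, updateCol_spliceCols_of_notMem A B hp, ← spliceCols_insert]
  have hq' : q ∉ insert p S := by simp [hq, hpq.symm]
  rw [det_updateCol_add, det_updateCol_smul, hexpand, hexpand,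
    updateCol_spliceCols_of_notMem A B hq, updateCol_spliceCols_of_notMem A B hq',
    ← spliceCols_insert, ← spliceCols_insert]
  field_simp
  ring

end Splice

section ModeMatrix

variable {m : ℕ} {ι : Type*}

/-- The leading boundary terms at `0` of the exponentials `t ↦ exp (ω_i t)`. -/
noncomputable def leftModes (C : Matrix (Fin m) (Fin m ⊕ Fin m) ℂ) (ω : ι → ℂ) :
    Matrix (Fin m) ι ℂ :=
  Matrix.of fun j i ↦ (leadingPair C j).1 * ω i ^ rowOrder C j

/-- The leading boundary terms at `1` of the exponentials `t ↦ exp (ω_i (t - 1))`. -/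
noncomputable def rightModes (C : Matrix (Fin m) (Fin m ⊕ Fin m) ℂ) (ω : ι → ℂ) :
    Matrix (Fin m) ι ℂ :=
  Matrix.of fun j i ↦ (leadingPair C j).2 * ω i ^ rowOrder C j

/-- The asymptotic characteristic matrix in which the modes with index in `S` live at the endpoint
`0` and the others at the endpoint `1`. -/
noncomputable def modeMatrix [DecidableEq ι] (C : Matrix (Fin m) (Fin m ⊕ Fin m) ℂ) (ω : ι → ℂ)
    (S : Finset ι) : Matrix (Fin m) ι ℂ :=
  spliceCols (leftModes C ω) (rightModes C ω) S

theorem modeMatrix_apply [DecidableEq ι] (C : Matrix (Fin m) (Fin m ⊕ Fin m) ℂ) (ω : ι → ℂ)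
    (S : Finset ι) (j : Fin m) (i : ι) :
    modeMatrix C ω S j i =
      (if i ∈ S then (leadingPair C j).1 else (leadingPair C j).2) * ω i ^ rowOrder C j := by
  by_cases hi : i ∈ S <;> simp [modeMatrix, spliceCols, leftModes, rightModes, hi]

theorem det_modeMatrix_mul (C : Matrix (Fin m) (Fin m ⊕ Fin m) ℂ) (ω : Fin m → ℂ) (ρ : ℂ)
    (S : Finset (Fin m)) :
    (modeMatrix C (fun i ↦ ω i * ρ) S).det =
      (∏ j, ρ ^ rowOrder C j) * (modeMatrix C ω S).det := by
  rw [← det_mul_column]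
  congr 1
  ext j i
  simp only [modeMatrix_apply, of_apply, mul_pow]
  ring

theorem IsNormalized.rescaledBC_zero_mulVec_cauchyData [DecidableEq ι] [Fintype ι]
    {C : Matrix (Fin m) (Fin m ⊕ Fin m) ℂ} (hC : IsNormalized C) (c ζ : ι → ℂ) (S : Finset ι) :
    rescaledBC C 0 *ᵥ Sum.elim
        (cauchyData (fun i : {i // i ∈ S} ↦ c i) fun i ↦ ζ i)
        (cauchyData (fun i : {i // i ∉ S} ↦ c i) fun i ↦ ζ i) = modeMatrix C ζ S *ᵥ c := by
  funext j
  rw [hC.rescaledBC_zero_mulVec, Sum.elim_inl, Sum.elim_inr, cauchyData, cauchyData,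
    Finset.mul_sum, Finset.mul_sum]
  simp only [mulVec, dotProduct]
  rw [← Finset.sum_add_sum_compl S, Finset.sum_subtype S fun _ ↦ Iff.rfl,
    Finset.sum_subtype Sᶜ fun _ ↦ Finset.mem_compl]
  refine congrArg₂ (· + ·) (Finset.sum_congr rfl fun i _ ↦ ?_) (Finset.sum_congr rfl fun i _ ↦ ?_)
  · rw [modeMatrix_apply, if_pos i.2]
    ring
  · rw [modeMatrix_apply, if_neg i.2]
    ring

/-- The matrix `D(s)` of the theorem, whose columns `p` and `q` mix the two endpoints. -/
noncomputable def charMatrix (C : Matrix (Fin m) (Fin m ⊕ Fin m) ℂ) (ω : Fin m → ℂ) (p q : Fin m)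
    (s : ℂ) : Matrix (Fin m) (Fin m) ℂ :=
  ((modeMatrix C ω (Finset.Iio p)).updateCol p
    ((leftModes C ω).col p + s • (rightModes C ω).col p)).updateCol q
      ((leftModes C ω).col q + s⁻¹ • (rightModes C ω).col q)

theorem charMatrix_apply (C : Matrix (Fin m) (Fin m ⊕ Fin m) ℂ) (ω : Fin m → ℂ) {p q : Fin m}
    (hpq : p < q) (s : ℂ) (j i : Fin m) :
    charMatrix C ω p q s j i =
      (if i < p then (leadingPair C j).1
       else if i = p then (leadingPair C j).1 + s * (leadingPair C j).2
       else if i = q then (leadingPair C j).1 + s⁻¹ * (leadingPair C j).2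
       else (leadingPair C j).2) * ω i ^ rowOrder C j := by
  rcases eq_or_ne i q with rfl | hiq
  · simp [charMatrix, leftModes, rightModes, hpq.not_gt, hpq.ne', add_mul, mul_assoc]
  rcases eq_or_ne i p with rfl | hip
  · simp [charMatrix, leftModes, rightModes, hiq, add_mul, mul_assoc]
  · simp [charMatrix, modeMatrix_apply, hiq, hip]

theorem mul_det_charMatrix (C : Matrix (Fin m) (Fin m ⊕ Fin m) ℂ) (ω : Fin m → ℂ) {p q : Fin m}
    (hpq : p < q) {s : ℂ} (hs : s ≠ 0) :
    s * (charMatrix C ω p q s).det =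
      (modeMatrix C ω (insert p (Finset.Iio p))).det +
        ((modeMatrix C ω (insert q (insert p (Finset.Iio p)))).det +
          (modeMatrix C ω (Finset.Iio p)).det) * s +
        (modeMatrix C ω (insert q (Finset.Iio p))).det * s ^ 2 :=
  mul_det_updateCol_updateCol_spliceCols _ _ (by simp) (by simpa using hpq.le) hpq.ne hs

end ModeMatrix

section Nonvanishing

variable {n : ℕ} {C : Matrix (Fin (2 * n)) (Fin (2 * n) ⊕ Fin (2 * n)) ℂ}
  {S : Finset (Fin (2 * n))}

theorem IsDissipativeBC.det_modeMatrix_ne_zero (hC : IsDissipativeBC n C) (hnorm : IsNormalized C)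
    {ζ : Fin (2 * n) → ℂ} (hinj : Function.Injective ζ) {μ : ℂ} (hμ : ∀ i, ζ i ^ (2 * n) = μ)
    (hsign : (-1) ^ n * μ.im < 0) (hneg : ∀ i ∈ S, (ζ i).re < 0) (hpos : ∀ i ∉ S, 0 < (ζ i).re) :
    (modeMatrix C ζ S).det ≠ 0 := by
  intro hdet
  obtain ⟨c, hc, hker⟩ := exists_mulVec_eq_zero_iff.mpr hdet
  obtain ⟨i, hi⟩ := Function.ne_iff.mp hc
  let ζ₀ : {i // i ∈ S} → ℂ := fun i ↦ ζ i
  let ζ₁ : {i // i ∉ S} → ℂ := fun i ↦ ζ i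
  have hn : n ≠ 0 := by
    rintro rfl
    exact i.elim0
  have hinj₀ : Function.Injective (-ζ₀) :=
    neg_injective.comp (hinj.comp Subtype.val_injective)
  have hinj₁ : Function.Injective ζ₁ := hinj.comp Subtype.val_injective
  have hpos₀ (i : {i // i ∈ S}) : 0 < ((-ζ₀) i).re := neg_pos.mpr (hneg i i.2)
  have hpos₁ (i : {i // i ∉ S}) : 0 < (ζ₁ i).re := hpos i i.2
  have hμ₀ (i : {i // i ∈ S}) : (-ζ₀) i ^ (2 * n) = μ := ((even_two_mul n).neg_pow _).trans (hμ i)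
  have hμ₁ (i : {i // i ∉ S}) : ζ₁ i ^ (2 * n) = μ := hμ i
  have hform := hC.boundaryForm_nonneg_of_rescaledBC_zero hnorm
    ((hnorm.rescaledBC_zero_mulVec_cauchyData c ζ S).trans hker)
  rw [boundaryForm, Sum.elim_comp_inl, Sum.elim_comp_inr, sub_eq_add_neg,
    ← qJ_cauchyData_neg hn] at hform
  refine hform.not_gt ?_
  by_cases hiS : i ∈ S
  · exact add_neg_of_nonpos_of_neg (qJ_cauchyData_le_zero hinj₁ hpos₁ hμ₁ hsign)
      (qJ_cauchyData_lt_zero hinj₀ hpos₀ hμ₀ hsign (Function.ne_iff.mpr ⟨⟨i, hiS⟩, hi⟩))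
  · exact add_neg_of_neg_of_nonpos
      (qJ_cauchyData_lt_zero hinj₁ hpos₁ hμ₁ hsign (Function.ne_iff.mpr ⟨⟨i, hiS⟩, hi⟩))
      (qJ_cauchyData_le_zero hinj₀ hpos₀ hμ₀ hsign)

theorem IsDissipativeBC.det_modeMatrix_ne_zero_of_rotation (hC : IsDissipativeBC n C)
    (hnorm : IsNormalized C) {ω : Fin (2 * n) → ℂ} (hω : ∀ i, ω i ^ (2 * n) = -1)
    (hinj : Function.Injective ω) (hrev : ∀ i, ω i.rev = -ω i) (hS : ∀ i ∉ S, i.rev ∈ S) {x : ℝ}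
    (hsign : 0 < (-1) ^ n * Real.sin (2 * n * x)) (hneg : ∀ i ∈ S, (ω i * exp (x * I)).re < 0) :
    (modeMatrix C ω S).det ≠ 0 := by
  have hμ (i : Fin (2 * n)) :
      (ω i * exp (x * I)) ^ (2 * n) = -exp ((2 * n * x : ℝ) * I) := by
    rw [mul_pow, hω, neg_one_mul, ← exp_nat_mul]
    push_cast
    ring_nf
  have hpos (i : Fin (2 * n)) (hi : i ∉ S) : 0 < (ω i * exp (x * I)).re := by
    simpa [hrev] using hneg i.rev (hS i hi)
  refine right_ne_zero_of_mul (a := ∏ j, exp (x * I) ^ rowOrder C j) ?_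
  rw [← det_modeMatrix_mul]
  exact hC.det_modeMatrix_ne_zero hnorm (fun i l h ↦ hinj (mul_right_cancel₀ (exp_ne_zero _) h)) hμ
    (by simpa only [neg_im, exp_ofReal_mul_I_im, mul_neg, neg_lt_zero] using hsign) hneg hpos

end Nonvanishing

/-! ### Enumerations of the roots -/

theorem exists_apply_eq_of_pow_eq {R : Type*} [CommRing R] [IsDomain R] {N : ℕ} {ω : Fin N → R}
    {a z : R} (hN : N ≠ 0) (hinj : Function.Injective ω) (hω : ∀ i, ω i ^ N = a) (hz : z ^ N = a) :
    ∃ i, ω i = z := by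
  classical
  have hmem {y : R} : y ∈ (Polynomial.nthRoots N a).toFinset ↔ y ^ N = a := by
    rw [Multiset.mem_toFinset, Polynomial.mem_nthRoots hN.bot_lt]
  have himage : Finset.univ.image ω = (Polynomial.nthRoots N a).toFinset := by
    refine Finset.eq_of_subset_of_card_le
      (Finset.image_subset_iff.mpr fun i _ ↦ hmem.mpr (hω i)) ?_
    rw [Finset.card_image_of_injective _ hinj, Finset.card_fin]
    exact (Multiset.toFinset_card_le _).trans (Polynomial.card_nthRoots N a)
  simpa using himage.ge (hmem.mpr hz)

section Rev

variable {E G : Type*} [Neg E] [AddCommGroup G] [LinearOrder G] [IsOrderedAddMonoid G] {g : E → G}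
  {N : ℕ} {ω : Fin N → E}

theorem apply_rev_eq_neg (hg : g.Odd) (hmono : StrictMono fun i ↦ g (ω i))
    (hneg : ∀ i, ∃ l, ω l = -ω i) (i : Fin N) : ω i.rev = -ω i := by
  choose σ hσ using hneg
  have hanti : StrictAnti σ := fun i l hil ↦ by
    rw [← hmono.lt_iff_lt, hσ, hσ, hg, hg, neg_lt_neg_iff]
    exact hmono hil
  have hσrev : (σ i).rev = i := (Fin.rev_strictAnti.comp hanti).apply_eq
  rw [← hσ, ← hσrev, Fin.rev_rev, hσrev]

theorem apply_neg_iff_lt_rev (hg : g.Odd) (hmono : StrictMono fun i ↦ g (ω i))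
    (hrev : ∀ i, ω i.rev = -ω i) (i : Fin N) : g (ω i) < 0 ↔ i < i.rev := by
  rw [← hmono.lt_iff_lt, hrev, hg, lt_neg_self_iff]

end Rev

theorem sin_lt_sin_of_lt_of_lt_pi_sub {φ x : ℝ} (hφ : -(Real.pi / 2) ≤ φ) (h₁ : φ < x)
    (h₂ : x < Real.pi - φ) : Real.sin φ < Real.sin x := by
  rw [← sub_pos, Real.sin_sub_sin]
  have hsin : 0 < Real.sin ((x - φ) / 2) :=
    Real.sin_pos_of_pos_of_lt_pi (by linarith) (by linarith)
  have hcos : 0 < Real.cos ((x + φ) / 2) := Real.cos_pos_of_mem_Ioo ⟨by linarith, by linarith⟩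
  positivity

theorem sin_pos_of_two_mul_mul_lt_pi {n : ℕ} (hn : n ≠ 0) {φ : ℝ} (hφ0 : 0 < φ)
    (hφ : 2 * n * φ < Real.pi) : 0 < Real.sin φ := by
  have h1 : (1 : ℝ) ≤ n := by exact_mod_cast Nat.one_le_iff_ne_zero.mpr hn
  exact Real.sin_pos_of_pos_of_lt_pi hφ0 (by nlinarith)

theorem exists_lt_eq_exp_of_pow_eq_one {N : ℕ} (hN : N ≠ 0) {η : ℂ} (hη : η ^ N = 1) :
    ∃ a < N, η = exp ((a * (2 * Real.pi / N) : ℝ) * I) := by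
  have : NeZero N := ⟨hN⟩
  obtain ⟨a, ha, rfl⟩ := (isPrimitiveRoot_exp N hN).eq_pow_of_pow_eq_one hη
  refine ⟨a, ha, ?_⟩
  rw [← exp_nat_mul]
  push_cast
  ring_nf

theorem im_exp_mul_exp (x y : ℝ) : (exp (x * I) * exp (y * I)).im = Real.sin (x + y) := by
  rw [← exp_add, ← add_mul, ← ofReal_add, exp_ofReal_mul_I_im]

-- The `2n`-th roots of unity `η ≠ 1` with `0 < im (η e^{iφ})` have argument in `[π/n, π - π/n]`,
-- and `φ` is less than half of the gap `π/n`.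
theorem sin_lt_im_mul_exp_and_im_mul_exp_neg_pos {n : ℕ} (hn : n ≠ 0) {η : ℂ}
    (hη : η ^ (2 * n) = 1) (hη1 : η ≠ 1) {φ : ℝ} (hφ0 : 0 < φ) (hφ : 2 * n * φ < Real.pi)
    (hpos : 0 < (η * exp (φ * I)).im) :
    Real.sin φ < (η * exp (φ * I)).im ∧ 0 < (η * exp ((-φ : ℝ) * I)).im := by
  obtain ⟨a, ha, rfl⟩ := exists_lt_eq_exp_of_pow_eq_one (by lia) hη
  set δ : ℝ := 2 * Real.pi / (2 * n : ℕ) with hδ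
  have hn0 : (0 : ℝ) < n := by positivity
  have hnδ : n * δ = Real.pi := by
    rw [hδ]
    push_cast
    field_simp
  have hφδ : 2 * φ < δ := by nlinarith
  rw [im_exp_mul_exp] at hpos
  rw [im_exp_mul_exp, im_exp_mul_exp]
  have ha1 : (1 : ℝ) ≤ a := by
    have ha0 : a ≠ 0 := by
      rintro rfl
      simp at hη1
    exact_mod_cast Nat.one_le_iff_ne_zero.mpr ha0
  have han : (a : ℝ) + 1 ≤ n := by
    have hlt : a < n := by
      by_contra! h
      have ha' : (a : ℝ) + 1 ≤ 2 * n := by exact_mod_cast ha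
      have h' : (n : ℝ) ≤ a := by exact_mod_cast h
      have := Real.sin_nonneg_of_nonneg_of_le_pi (x := a * δ + φ - Real.pi)
        (by nlinarith) (by nlinarith)
      rw [Real.sin_sub_pi] at this
      linarith
    exact_mod_cast hlt
  have hlower : δ ≤ a * δ := le_mul_of_one_le_left (by linarith) ha1
  have hupper : a * δ + δ ≤ Real.pi := by nlinarith
  exact ⟨sin_lt_sin_of_lt_of_lt_pi_sub (by linarith [Real.pi_pos]) (by linarith) (by linarith),
    Real.sin_pos_of_pos_of_lt_pi (by linarith) (by linarith)⟩

theorem re_mul_exp_lt_and_re_mul_exp_neg_neg {n : ℕ} (hn : Odd n) {z : ℂ}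
    (hz : z ^ (2 * n) = -1) (hzI : z ≠ I) {φ : ℝ} (hφ0 : 0 < φ) (hφ : 2 * n * φ < Real.pi)
    (hneg : (z * exp (φ * I)).re < 0) :
    (z * exp (φ * I)).re < (I * exp (φ * I)).re ∧ (z * exp ((-φ : ℝ) * I)).re < 0 := by
  obtain ⟨η, rfl⟩ : ∃ η, I * η = z := ⟨z / I, mul_div_cancel₀ _ I_ne_zero⟩
  have hη : η ^ (2 * n) = 1 := by
    rwa [mul_pow, pow_mul I, I_sq, hn.neg_one_pow, neg_one_mul, neg_inj] at hz
  have hη1 : η ≠ 1 := by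
    rintro rfl
    exact hzI (mul_one I)
  rw [mul_assoc, I_mul_re, neg_lt_zero] at hneg
  have h := sin_lt_im_mul_exp_and_im_mul_exp_neg_pos hn.pos.ne' hη hη1 hφ0 hφ hneg
  rwa [mul_assoc, mul_assoc, I_mul_re, I_mul_re, I_mul_re, neg_lt_neg_iff, neg_lt_zero,
    exp_ofReal_mul_I_im]

section Enumeration

variable {n : ℕ} {ω : Fin (2 * n) → ℂ} {φ : ℝ}

theorem rootEnumeration_injective (hmono : StrictMono fun i ↦ (ω i * exp (φ * I)).re) :
    Function.Injective ω := fun _ _ h ↦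
  hmono.injective (congrArg (fun z ↦ (z * exp (φ * I)).re) h)

theorem rootEnumeration_rev (hω : ∀ i, ω i ^ (2 * n) = -1)
    (hmono : StrictMono fun i ↦ (ω i * exp (φ * I)).re) (i : Fin (2 * n)) : ω i.rev = -ω i :=
  apply_rev_eq_neg (g := fun z ↦ (z * exp (φ * I)).re) (fun z ↦ by simp) hmono
    (fun l ↦ exists_apply_eq_of_pow_eq l.pos.ne' (rootEnumeration_injective hmono) hω
      (by rw [(even_two_mul n).neg_pow, hω])) i

theorem re_rootEnumeration_mul_neg_iff (hω : ∀ i, ω i ^ (2 * n) = -1)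
    (hmono : StrictMono fun i ↦ (ω i * exp (φ * I)).re) (i : Fin (2 * n)) :
    (ω i * exp (φ * I)).re < 0 ↔ (i : ℕ) < n := by
  rw [apply_neg_iff_lt_rev (g := fun z ↦ (z * exp (φ * I)).re) (fun z ↦ by simp) hmono
    (rootEnumeration_rev hω hmono), Fin.lt_def, Fin.val_rev]
  lia

theorem rootEnumeration_eq_I (hn : Odd n) (hω : ∀ i, ω i ^ (2 * n) = -1)
    (hmono : StrictMono fun i ↦ (ω i * exp (φ * I)).re) (hφ0 : 0 < φ)
    (hφ : 2 * n * φ < Real.pi) {p : Fin (2 * n)} (hp : (p : ℕ) + 1 = n) : ω p = I := by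
  obtain ⟨l, hl⟩ := exists_apply_eq_of_pow_eq p.pos.ne' (rootEnumeration_injective hmono) hω
    (z := I) (by rw [pow_mul, I_sq, hn.neg_one_pow])
  have hln : (l : ℕ) < n := by
    rw [← re_rootEnumeration_mul_neg_iff hω hmono, hl, I_mul_re, exp_ofReal_mul_I_im, neg_lt_zero]
    exact sin_pos_of_two_mul_mul_lt_pi hn.pos.ne' hφ0 hφ
  by_contra hpI
  have hpneg := (re_rootEnumeration_mul_neg_iff hω hmono p).mpr (by lia)
  have hpl : p < l := by
    rw [← hmono.lt_iff_lt, hl]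
    exact (re_mul_exp_lt_and_re_mul_exp_neg_neg hn (hω p) hpI hφ0 hφ hpneg).1
  lia

variable {C : Matrix (Fin (2 * n)) (Fin (2 * n) ⊕ Fin (2 * n)) ℂ} {p q : Fin (2 * n)}

theorem IsDissipativeBC.det_modeMatrix_ne_zero_of_even (hC : IsDissipativeBC n C)
    (hnorm : IsNormalized C) (hn : Even n) (hω : ∀ i, ω i ^ (2 * n) = -1)
    (hmono : StrictMono fun i ↦ (ω i * exp (φ * I)).re) (hφ0 : 0 < φ)
    (hφ : 2 * n * φ < Real.pi) (hp : (p : ℕ) + 1 = n) :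
    (modeMatrix C ω (insert p (Finset.Iio p))).det ≠ 0 := by
  have hmem (i : Fin (2 * n)) : i ∈ insert p (Finset.Iio p) ↔ (i : ℕ) < n := by
    rw [Finset.Iio_insert, Finset.mem_Iic, Fin.le_def]
    lia
  refine hC.det_modeMatrix_ne_zero_of_rotation hnorm hω (rootEnumeration_injective hmono)
    (rootEnumeration_rev hω hmono) (x := φ) (fun i hi ↦ ?_) ?_ fun i hi ↦ ?_
  · rw [hmem, Fin.val_rev] at *
    lia
  · rw [hn.neg_one_pow, one_mul]
    exact Real.sin_pos_of_pos_of_lt_pi (mul_pos (by exact_mod_cast p.pos) hφ0) hφ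
  · exact (re_rootEnumeration_mul_neg_iff hω hmono i).mpr ((hmem i).mp hi)

theorem IsDissipativeBC.det_modeMatrix_ne_zero_of_odd (hC : IsDissipativeBC n C)
    (hnorm : IsNormalized C) (hn : Odd n) (hω : ∀ i, ω i ^ (2 * n) = -1)
    (hmono : StrictMono fun i ↦ (ω i * exp (φ * I)).re) (hφ0 : 0 < φ)
    (hφ : 2 * n * φ < Real.pi) (hp : (p : ℕ) + 1 = n) (hq : (q : ℕ) = n) :
    (modeMatrix C ω (insert q (Finset.Iio p))).det ≠ 0 := by
  have hinj := rootEnumeration_injective hmono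
  have hrev := rootEnumeration_rev hω hmono
  have hpI := rootEnumeration_eq_I hn hω hmono hφ0 hφ hp
  have hsin : 0 < Real.sin (2 * n * φ) :=
    Real.sin_pos_of_pos_of_lt_pi (mul_pos (by exact_mod_cast p.pos) hφ0) hφ
  refine hC.det_modeMatrix_ne_zero_of_rotation hnorm hω hinj hrev (x := -φ)
    (fun i hi ↦ ?_) ?_ fun i hi ↦ ?_
  · simp only [Finset.mem_insert, Finset.mem_Iio, Fin.ext_iff, Fin.lt_def, Fin.val_rev] at *
    lia
  · simpa only [hn.neg_one_pow, mul_neg, Real.sin_neg, neg_one_mul, neg_neg] using hsin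
  · rcases Finset.mem_insert.mp hi with hiq | hip
    · have hqp : q = p.rev := Fin.ext (by rw [Fin.val_rev]; lia)
      rw [hiq, hqp, hrev, hpI, neg_mul, neg_re, I_mul_re, neg_neg, exp_ofReal_mul_I_im,
        Real.sin_neg, neg_lt_zero]
      exact sin_pos_of_two_mul_mul_lt_pi hn.pos.ne' hφ0 hφ
    · have hi' : i < p := Finset.mem_Iio.mp hip
      have hine : ω i ≠ I := fun h ↦ hi'.ne (hinj (h.trans hpI.symm))
      exact (re_mul_exp_lt_and_re_mul_exp_neg_neg hn (hω i) hine hφ0 hφ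
        ((re_rootEnumeration_mul_neg_iff hω hmono i).mpr (by lia))).2

end Enumeration

end

/-- a normalized dissipative system of boundary conditions of even order
`m = 2n` is Birkhoff regular.  The rows are assumed ordered by decreasing order
`k_1 ≥ … ≥ k_{2n}`; `ω_1, …, ω_{2n}` are the `2n`-th roots of `−1`, enumerated so that
`Re(ω_i e^{iπ/(4n)})` is strictly increasing.  The conclusion states that
`s·det D(s) = θ_{−1} + θ_0·s + θ_1·s²` for all `s ≠ 0` and that `θ_{−1} ≠ 0` or
`θ_1 ≠ 0`, where `D(s)` is the characteristic determinant matrix built from the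
leading pairs `(α_j, β_j)` and orders `k_j` (columns indexed from 0: column `i < n−1`
carries `α_j ω_i^{k_j}`, column `n−1` carries `(α_j + sβ_j)ω_{n-1}^{k_j}`, column `n`
carries `(α_j + s⁻¹β_j)ω_n^{k_j}`, and columns `i > n` carry `β_j ω_i^{k_j}`). -/
theorem stmt18 (n : ℕ) (hn : 1 ≤ n)
    (C : Matrix (Fin (2 * n)) (Fin (2 * n) ⊕ Fin (2 * n)) ℂ)
    (hrank : C.rank = 2 * n) (hnorm : IsNormalized C) (hdiss : IsDissipativeBC n C)
    (hsorted : ∀ j j' : Fin (2 * n), j ≤ j' → rowOrder C j' ≤ rowOrder C j)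
    (ω : Fin (2 * n) → ℂ) (hω : ∀ i, ω i ^ (2 * n) = -1)
    (hmono : StrictMono fun i =>
      (ω i * Complex.exp ((Real.pi : ℂ) * Complex.I / (4 * (n : ℂ)))).re) :
    ∃ θm1 θ0 θ1 : ℂ,
      (∀ s : ℂ, s ≠ 0 →
        s * (Matrix.of fun j i : Fin (2 * n) =>
          (if (i : ℕ) < n - 1 then (leadingPair C j).1
           else if (i : ℕ) = n - 1 then (leadingPair C j).1 + s * (leadingPair C j).2
           else if (i : ℕ) = n then (leadingPair C j).1 + s⁻¹ * (leadingPair C j).2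
           else (leadingPair C j).2) * ω i ^ rowOrder C j).det
          = θm1 + θ0 * s + θ1 * s ^ 2)
      ∧ (θm1 ≠ 0 ∨ θ1 ≠ 0) := by
  have hφ : 2 * n * (Real.pi / (4 * n)) < Real.pi := by
    field_simp
    norm_num
  have hexp : (Real.pi : ℂ) * Complex.I / (4 * n) = (Real.pi / (4 * n) : ℝ) * Complex.I := by
    push_cast
    ring
  rw [hexp] at hmono
  let p : Fin (2 * n) := ⟨n - 1, by lia⟩
  let q : Fin (2 * n) := ⟨n, by lia⟩
  have hp : (p : ℕ) + 1 = n := Nat.sub_add_cancel hn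
  have hpq : p < q := Nat.sub_one_lt_of_lt hn
  refine ⟨(modeMatrix C ω (insert p (Finset.Iio p))).det, _,
    (modeMatrix C ω (insert q (Finset.Iio p))).det,
    fun s hs ↦ Eq.trans ?_ (mul_det_charMatrix C ω hpq hs), ?_⟩
  · congr 2
    ext j i
    simp [charMatrix_apply C ω hpq, Fin.lt_def, Fin.ext_iff, p, q]
  · rcases n.even_or_odd with heven | hodd
    · exact .inl (hdiss.det_modeMatrix_ne_zero_of_even hnorm heven hω hmono (by positivity) hφ hp)
    · exact .inr
        (hdiss.det_modeMatrix_ne_zero_of_odd hnorm hodd hω hmono (by positivity) hφ hp rfl)
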